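/- (Proposition 1, signs as forced by equations (19), (20), (22) of the paper.) Along the cycle chart, assume the cycle conditions τ_N ≡ 0 and k_B + K̄ ≡ 0, and assume K(u) − k(u) > 0 and k(u) + K(u) ≠ 0 for all u (minimal principal mean curvature cycle avoiding normal singularities). Then the logarithm of the derivative of the Poincaré map of the cycle, given by ∫₀^L −∂_v(E f_H − F e_H)(u,0) / (E g_H − G e_H)(u,0) du, equals −∫₀^L k'(u)/(K(u) − k(u)) du − ∫₀^L k_B(u)τ_B(u)/(K(u) − k(u)) du + ∫₀^L (∂H̃₂/∂v)(u,0)·τ(u) / (H̃₁(u,0)(K(u) − k(u))) du. -/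

import Mathlib

/-!
Only the 1-jet in `v` of the chart along the cycle `v = 0` matters. There `α_u = t`, `α_v = T`,
and, using `τ_N = 0`, `α_uu = t'`, `α_uv = T' = -k_g t - τ B`, `α_vv = K N + K̄ B`. The only third
derivative needed is `α_uvv = (K N + K̄ B)'`, by symmetry of mixed partial derivatives. At `v = 0`
the normal frame is `N₁ = N`, `N₂ = t ∧ T ∧ N = B`, so that `E = G = 1`, `F = 0`,
`e₁ = k`, `f₁ = 0`, `g₁ = K`, `e₂ = k_B`, `f₂ = -τ`, `g₂ = K̄ = -k_B`, and hence
`H̃₁ = (K + k)/2`, `H̃₂ = 0`.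

Since moreover `F_v = 0` and `f_H = H̃₁ f₁ + H̃₂ f₂` vanishes on the cycle,
`(E f_H - F e_H)_v = H̃₁ (f₁)_v - τ (H̃₂)_v`. No derivative of `N₁` is needed for `(f₁)_v`: up to
the factor `1/|B̄₁|` it is the derivative of `⟨α_uv, B̄₁⟩`, which gives
`(f₁)_v = ⟨α_uvv, N⟩ = K' + k_B τ_B`. The denominator is `H̃₁ (K - k)` (`chart_at_cycle`).
So the integrand is `-(K' + k_B τ_B)/(K - k) + (H̃₂)_v τ / (H̃₁ (K - k))`, and
`K'` may be replaced by `k'` because `(K' - k')/(K - k)` is the derivative of the periodic function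
`log (K - k)`. Splitting the integral uses continuity of `(H̃₂)_v` along the cycle, which holds
because `H̃₂` is smooth near it.
-/

noncomputable section

open scoped RealInnerProductSpace

abbrev E4 : Type := EuclideanSpace ℝ (Fin 4)

/-- Partial derivative with respect to the first variable `u`. -/
def pdu {X : Type*} [NormedAddCommGroup X] [NormedSpace ℝ X]
    (f : ℝ × ℝ → X) (p : ℝ × ℝ) : X := fderiv ℝ f p (1, 0)

/-- Partial derivative with respect to the second variable `v`. -/
def pdv {X : Type*} [NormedAddCommGroup X] [NormedSpace ℝ X]
    (f : ℝ × ℝ → X) (p : ℝ × ℝ) : X := fderiv ℝ f p (0, 1)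

/-- The wedge `x ∧ y ∧ z` of three vectors of `ℝ⁴`: the unique vector satisfying
`⟪x ∧ y ∧ z, w⟫ = det (x, y, z, w)` for all `w ∈ ℝ⁴`. -/
def wedge (x y z : E4) : E4 :=
  (WithLp.equiv 2 (Fin 4 → ℝ)).symm fun i =>
    Matrix.det (Matrix.of ![(x : Fin 4 → ℝ), y, z, fun j => if j = i then 1 else 0])

namespace Cycle

/-- Coefficient `E` of the first fundamental form. -/
def Ec (α : ℝ × ℝ → E4) (p : ℝ × ℝ) : ℝ := ⟪pdu α p, pdu α p⟫
/-- Coefficient `F` of the first fundamental form. -/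
def Fc (α : ℝ × ℝ → E4) (p : ℝ × ℝ) : ℝ := ⟪pdu α p, pdv α p⟫
/-- Coefficient `G` of the first fundamental form. -/
def Gc (α : ℝ × ℝ → E4) (p : ℝ × ℝ) : ℝ := ⟪pdv α p, pdv α p⟫

/-- `x₁ = ⟨α_u, t⟩`. -/
def x1 (α : ℝ × ℝ → E4) (t : ℝ → E4) (p : ℝ × ℝ) : ℝ := ⟪pdu α p, t p.1⟫
/-- `x₂ = ⟨α_u, T⟩`. -/
def x2 (α : ℝ × ℝ → E4) (T : ℝ → E4) (p : ℝ × ℝ) : ℝ := ⟪pdu α p, T p.1⟫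
/-- `x₃ = ⟨α_u, N⟩`. -/
def x3 (α : ℝ × ℝ → E4) (N : ℝ → E4) (p : ℝ × ℝ) : ℝ := ⟪pdu α p, N p.1⟫
/-- `y₁ = ⟨α_v, N⟩`. -/
def y1 (α : ℝ × ℝ → E4) (N : ℝ → E4) (p : ℝ × ℝ) : ℝ := ⟪pdv α p, N p.1⟫

/-- `B̄₁ = (y₁x₂ − x₃)t − x₁y₁T + x₁N`. -/
def Bb1 (α : ℝ × ℝ → E4) (t T N : ℝ → E4) (p : ℝ × ℝ) : E4 :=
  (y1 α N p * x2 α T p - x3 α N p) • t p.1 - (x1 α t p * y1 α N p) • T p.1 + x1 α t p • N p.1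

/-- `B̄₂ = α_u ∧ α_v ∧ B̄₁`. -/
def Bb2 (α : ℝ × ℝ → E4) (t T N : ℝ → E4) (p : ℝ × ℝ) : E4 :=
  wedge (pdu α p) (pdv α p) (Bb1 α t T N p)

/-- `N₁ = B̄₁/|B̄₁|`. -/
def N1 (α : ℝ × ℝ → E4) (t T N : ℝ → E4) (p : ℝ × ℝ) : E4 :=
  ‖Bb1 α t T N p‖⁻¹ • Bb1 α t T N p

/-- `N₂ = B̄₂/|B̄₂|`. -/
def N2 (α : ℝ × ℝ → E4) (t T N : ℝ → E4) (p : ℝ × ℝ) : E4 :=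
  ‖Bb2 α t T N p‖⁻¹ • Bb2 α t T N p

def e1 (α : ℝ × ℝ → E4) (t T N : ℝ → E4) (p : ℝ × ℝ) : ℝ := ⟪pdu (pdu α) p, N1 α t T N p⟫
def f1 (α : ℝ × ℝ → E4) (t T N : ℝ → E4) (p : ℝ × ℝ) : ℝ := ⟪pdv (pdu α) p, N1 α t T N p⟫
def g1 (α : ℝ × ℝ → E4) (t T N : ℝ → E4) (p : ℝ × ℝ) : ℝ := ⟪pdv (pdv α) p, N1 α t T N p⟫
def e2 (α : ℝ × ℝ → E4) (t T N : ℝ → E4) (p : ℝ × ℝ) : ℝ := ⟪pdu (pdu α) p, N2 α t T N p⟫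
def f2 (α : ℝ × ℝ → E4) (t T N : ℝ → E4) (p : ℝ × ℝ) : ℝ := ⟪pdv (pdu α) p, N2 α t T N p⟫
def g2 (α : ℝ × ℝ → E4) (t T N : ℝ → E4) (p : ℝ × ℝ) : ℝ := ⟪pdv (pdv α) p, N2 α t T N p⟫

/-- `H̃₁ = (E g₁ − 2F f₁ + G e₁)/(2(EG − F²))`. -/
def Ht1 (α : ℝ × ℝ → E4) (t T N : ℝ → E4) (p : ℝ × ℝ) : ℝ :=
  (Ec α p * g1 α t T N p - 2 * Fc α p * f1 α t T N p + Gc α p * e1 α t T N p) /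
    (2 * (Ec α p * Gc α p - Fc α p ^ 2))

/-- `H̃₂ = (E g₂ − 2F f₂ + G e₂)/(2(EG − F²))`. -/
def Ht2 (α : ℝ × ℝ → E4) (t T N : ℝ → E4) (p : ℝ × ℝ) : ℝ :=
  (Ec α p * g2 α t T N p - 2 * Fc α p * f2 α t T N p + Gc α p * e2 α t T N p) /
    (2 * (Ec α p * Gc α p - Fc α p ^ 2))

/-- The mean curvature vector `H = H̃₁N₁ + H̃₂N₂`. -/
def Hvec (α : ℝ × ℝ → E4) (t T N : ℝ → E4) (p : ℝ × ℝ) : E4 :=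
  Ht1 α t T N p • N1 α t T N p + Ht2 α t T N p • N2 α t T N p

def eH (α : ℝ × ℝ → E4) (t T N : ℝ → E4) (p : ℝ × ℝ) : ℝ := ⟪pdu (pdu α) p, Hvec α t T N p⟫
def fH (α : ℝ × ℝ → E4) (t T N : ℝ → E4) (p : ℝ × ℝ) : ℝ := ⟪pdv (pdu α) p, Hvec α t T N p⟫
def gH (α : ℝ × ℝ → E4) (t T N : ℝ → E4) (p : ℝ × ℝ) : ℝ := ⟪pdv (pdv α) p, Hvec α t T N p⟫

end Cycle

open Cycle

/-! ### Partial derivatives -/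

section Calculus

variable {X : Type*} [NormedAddCommGroup X] [NormedSpace ℝ X]

theorem hasDerivAt_pdv {f : ℝ × ℝ → X} {u v : ℝ} (h : DifferentiableAt ℝ f (u, v)) :
    HasDerivAt (fun s => f (u, s)) (pdv f (u, v)) v := by
  have h2 : HasDerivAt (fun s : ℝ => (u, s)) ((0 : ℝ), (1 : ℝ)) v :=
    (hasDerivAt_const v u).prodMk (hasDerivAt_id v)
  exact h.hasFDerivAt.comp_hasDerivAt v h2

theorem hasDerivAt_pdu {f : ℝ × ℝ → X} {u v : ℝ} (h : DifferentiableAt ℝ f (u, v)) :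
    HasDerivAt (fun s => f (s, v)) (pdu f (u, v)) u := by
  have h2 : HasDerivAt (fun s : ℝ => (s, v)) ((1 : ℝ), (0 : ℝ)) u :=
    (hasDerivAt_id u).prodMk (hasDerivAt_const u v)
  exact h.hasFDerivAt.comp_hasDerivAt u h2

theorem contDiff_pdu {f : ℝ × ℝ → X} (h : ContDiff ℝ (⊤ : ℕ∞) f) :
    ContDiff ℝ (⊤ : ℕ∞) (pdu f) :=
  (h.fderiv_right (m := (⊤ : ℕ∞)) (by simp)).clm_apply contDiff_const

theorem contDiff_pdv {f : ℝ × ℝ → X} (h : ContDiff ℝ (⊤ : ℕ∞) f) :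
    ContDiff ℝ (⊤ : ℕ∞) (pdv f) :=
  (h.fderiv_right (m := (⊤ : ℕ∞)) (by simp)).clm_apply contDiff_const

theorem ContDiff.differentiableAt_top {Y Z : Type*} [NormedAddCommGroup Y] [NormedSpace ℝ Y]
    [NormedAddCommGroup Z] [NormedSpace ℝ Z] {f : Y → Z}
    (h : ContDiff ℝ (⊤ : ℕ∞) f) (p : Y) : DifferentiableAt ℝ f p :=
  (h.differentiable (by simp)) p

/-- Symmetry of mixed partial derivatives. -/
theorem pdv_pdu {f : ℝ × ℝ → X} (h : ContDiff ℝ (⊤ : ℕ∞) f) : pdv (pdu f) = pdu (pdv f) := by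
  funext p
  have hd : DifferentiableAt ℝ (fderiv ℝ f) p :=
    (h.fderiv_right (m := (⊤ : ℕ∞)) (by simp)).differentiableAt_top p
  have hs : IsSymmSndFDerivAt ℝ f p := h.contDiffAt.isSymmSndFDerivAt 
    (by simpa using WithTop.coe_le_coe.2 (le_top : (2 : ℕ∞) ≤ ⊤))
  have e1 : pdv (pdu f) p = fderiv ℝ (fderiv ℝ f) p (0, 1) (1, 0) := by
    have := (hd.hasFDerivAt.clm_apply (hasFDerivAt_const ((1 : ℝ), (0 : ℝ)) p)).fderiv
    change fderiv ℝ (fun q => fderiv ℝ f q (1, 0)) p (0, 1) = _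
    rw [this]; simp
  have e2 : pdu (pdv f) p = fderiv ℝ (fderiv ℝ f) p (1, 0) (0, 1) := by
    have := (hd.hasFDerivAt.clm_apply (hasFDerivAt_const ((0 : ℝ), (1 : ℝ)) p)).fderiv
    change fderiv ℝ (fun q => fderiv ℝ f q (0, 1)) p (1, 0) = _
    rw [this]; simp
  rw [e1, e2]
  exact hs _ _

/-- For `g(v) = x + v y + v² W(v)` one has `g'(0) = y` and `g''(0) = 2 W(0)`. Applied to
`v ↦ α(u, v)`, this reads off `α_v` and `α_vv` on the cycle. -/
theorem second_deriv_zero {x y : X} {W : ℝ → X} (hW : ContDiff ℝ (⊤ : ℕ∞) W)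
    {g g' : ℝ → X} {g'' : X} (hg : ∀ v, g v = x + v • y + v ^ 2 • W v)
    (h1 : ∀ v, HasDerivAt g (g' v) v) (h2 : HasDerivAt g' g'' 0) :
    g' 0 = y ∧ g'' = (2 : ℝ) • W 0 := by
  have hW1 : ∀ v, HasDerivAt W (deriv W v) v :=
    fun v => (hW.differentiableAt_top v).hasDerivAt
  have hW2 : DifferentiableAt ℝ (deriv W) 0 := by
    have : ContDiff ℝ (⊤ : ℕ∞) (deriv W) := ContDiff.deriv' (by simpa using hW)
    exact this.differentiableAt_top 0
  have e : ∀ v, g' v = y + v • ((2 : ℝ) • W v + v • deriv W v) := by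
    intro v
    have h3 : HasDerivAt g ((1 : ℝ) • y + (v ^ 2 • deriv W v + (2 * v) • W v)) v := by
      have := (((hasDerivAt_id v).smul_const y).const_add x).add
        (((hasDerivAt_id v).pow 2).smul (hW1 v))
      have hgf : g = fun v => x + v • y + v ^ 2 • W v := funext hg
      rw [hgf]
      convert this using 1
      · rfl
      · simp
    rw [(h1 v).unique h3]
    module
  refine ⟨by simp [e 0], ?_⟩
  have hg' : g' = fun v => y + v • ((2 : ℝ) • W v + v • deriv W v) := funext e
  have h4 := ((hasDerivAt_id (0 : ℝ)).smul
    (((hW1 0).const_smul (2 : ℝ)).add ((hasDerivAt_id (0 : ℝ)).smul hW2.hasDerivAt))).const_add y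
  rw [hg'] at h2
  rw [h2.unique h4]
  simp

end Calculus

/-! ### The wedge product -/

/-- The defining property of the wedge product. -/
theorem inner_wedge (x y z w : E4) :
    ⟪wedge x y z, w⟫ = Matrix.det (Matrix.of ![(x : Fin 4 → ℝ), y, z, w]) := by
  simp [wedge, PiLp.inner_apply, Matrix.det_succ_row_zero, Fin.sum_univ_succ,
    Fin.succAbove, Matrix.submatrix]
  ring

theorem contDiffAt_wedge {x y z : ℝ × ℝ → E4} {p : ℝ × ℝ} (hx : ContDiffAt ℝ (⊤ : ℕ∞) x p)
    (hy : ContDiffAt ℝ (⊤ : ℕ∞) y p) (hz : ContDiffAt ℝ (⊤ : ℕ∞) z p) :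
    ContDiffAt ℝ (⊤ : ℕ∞) (fun q => wedge (x q) (y q) (z q)) p := by
  rw [contDiffAt_euclidean] at *
  intro i
  change ContDiffAt ℝ (⊤ : ℕ∞) (fun q => Matrix.det (Matrix.of ![(x q : Fin 4 → ℝ), y q, z q,
    fun j => if j = i then 1 else 0])) p
  simp only [Matrix.det_apply]
  refine ContDiffAt.sum fun σ _ => ContDiffAt.const_smul _ (contDiffAt_prod fun j _ => ?_)
  generalize σ j = m
  fin_cases m
  · exact hx j
  · exact hy j
  · exact hz j
  · exact contDiffAt_const

/-- The wedge of the first three vectors of a positive orthonormal frame is the fourth. -/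
theorem wedge_frame {t T N B : E4} (h1 : ⟪t, B⟫ = 0) (h2 : ⟪T, B⟫ = 0) (h3 : ⟪N, B⟫ = 0)
    (h4 : ⟪B, B⟫ = 1)
    (hdet : Matrix.det (Matrix.of ![(t : Fin 4 → ℝ), T, N, B]) = 1) : wedge t T N = B := by
  -- The difference is orthogonal to the rows of an invertible matrix.
  have key : (Matrix.of ![(t : Fin 4 → ℝ), T, N, B]).mulVec ((wedge t T N - B : E4)) = 0 := by
    have h : ∀ w : E4, (w : Fin 4 → ℝ) ⬝ᵥ ((wedge t T N - B : E4) : Fin 4 → ℝ)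
        = Matrix.det (Matrix.of ![(t : Fin 4 → ℝ), T, N, w]) - ⟪w, B⟫ := by
      intro w
      rw [← inner_wedge, real_inner_comm B w, ← inner_sub_left]
      simp [PiLp.inner_apply, dotProduct]
    funext i
    fin_cases i
    · refine (h t).trans ?_
      rw [h1, sub_zero]
      exact Matrix.det_zero_of_row_eq (i := 0) (j := 3) (by decide) rfl
    · refine (h T).trans ?_
      rw [h2, sub_zero]
      exact Matrix.det_zero_of_row_eq (i := 1) (j := 3) (by decide) rfl
    · refine (h N).trans ?_
      rw [h3, sub_zero]
      exact Matrix.det_zero_of_row_eq (i := 2) (j := 3) (by decide) rfl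
    · refine (h B).trans ?_
      rw [h4, hdet, sub_self]; rfl
  have := Matrix.eq_zero_of_mulVec_eq_zero (by rw [hdet]; exact one_ne_zero) key
  rw [← sub_eq_zero]
  ext i
  exact congrFun this i

/-! ### The chart along the cycle -/

section Chart

variable {α : ℝ × ℝ → E4} {t T N B : ℝ → E4} {u : ℝ}

theorem contDiff_comp_fst {X : ℝ → E4} (hX : ContDiff ℝ (⊤ : ℕ∞) X) :
    ContDiff ℝ (⊤ : ℕ∞) (fun p : ℝ × ℝ => X p.1) := hX.comp contDiff_fst

theorem contDiff_Bb1 (hα : ContDiff ℝ (⊤ : ℕ∞) α) (ht : ContDiff ℝ (⊤ : ℕ∞) t)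
    (hT : ContDiff ℝ (⊤ : ℕ∞) T) (hN : ContDiff ℝ (⊤ : ℕ∞) N) :
    ContDiff ℝ (⊤ : ℕ∞) (Bb1 α t T N) := by
  have h1 := contDiff_pdu hα
  have h2 := contDiff_pdv hα
  have ht' := contDiff_comp_fst ht
  have hT' := contDiff_comp_fst hT
  have hN' := contDiff_comp_fst hN
  have hx1 : ContDiff ℝ (⊤ : ℕ∞) (x1 α t) := h1.inner ℝ ht'
  have hx2 : ContDiff ℝ (⊤ : ℕ∞) (x2 α T) := h1.inner ℝ hT'
  have hx3 : ContDiff ℝ (⊤ : ℕ∞) (x3 α N) := h1.inner ℝ hN'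
  have hy1 : ContDiff ℝ (⊤ : ℕ∞) (y1 α N) := h2.inner ℝ hN'
  exact ((((hy1.mul hx2).sub hx3).smul ht').sub ((hx1.mul hy1).smul hT')).add (hx1.smul hN')

theorem norm_eq_one_of_inner {x : E4} (h : ⟪x, x⟫ = 1) : ‖x‖ = 1 := by
  rw [real_inner_self_eq_norm_sq] at h
  nlinarith [norm_nonneg x]

theorem Bb1_zero (hu : pdu α (u, 0) = t u) (hv : pdv α (u, 0) = T u)
    (htt : ⟪t u, t u⟫ = 1) (htT : ⟪t u, T u⟫ = 0) (htN : ⟪t u, N u⟫ = 0)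
    (hTN : ⟪T u, N u⟫ = 0) : Bb1 α t T N (u, 0) = N u := by
  simp [Bb1, x1, x2, x3, y1, hu, hv, norm_eq_one_of_inner htt, htT, htN, hTN]

theorem contDiffAt_normalize {Y : ℝ × ℝ → E4} {p : ℝ × ℝ} (hY : ContDiffAt ℝ (⊤ : ℕ∞) Y p)
    (h1 : ‖Y p‖ = 1) : ContDiffAt ℝ (⊤ : ℕ∞) (fun q => ‖Y q‖⁻¹ • Y q) p := by
  have h0 : Y p ≠ 0 := fun h => by simp [h] at h1
  exact ((hY.norm ℝ h0).inv (by rw [h1]; exact one_ne_zero)).smul hY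

/-- The pointwise computation at `(u, 0)`. The scalars are the values at `u` of the Darboux
curvatures and of the coefficients of the chart, and the hypotheses record the partial derivatives
of `α` that enter; `s` stands for `α_uvv`. -/
theorem chart_at_cycle {kg k kB τ K Kb : ℝ} {s : E4}
    (hα : ContDiff ℝ (⊤ : ℕ∞) α) (ht : ContDiff ℝ (⊤ : ℕ∞) t)
    (hT : ContDiff ℝ (⊤ : ℕ∞) T) (hN : ContDiff ℝ (⊤ : ℕ∞) N)
    (hortho : ⟪t u, t u⟫ = 1 ∧ ⟪T u, T u⟫ = 1 ∧ ⟪N u, N u⟫ = 1 ∧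
      ⟪B u, B u⟫ = 1 ∧ ⟪t u, T u⟫ = 0 ∧ ⟪t u, N u⟫ = 0 ∧ ⟪t u, B u⟫ = 0 ∧
      ⟪T u, N u⟫ = 0 ∧ ⟪T u, B u⟫ = 0 ∧ ⟪N u, B u⟫ = 0)
    (hdet : Matrix.det (Matrix.of ![(t u : Fin 4 → ℝ), T u, N u, B u]) = 1)
    (hu : pdu α (u, 0) = t u) (hv : pdv α (u, 0) = T u)
    (huu : pdu (pdu α) (u, 0) = kg • T u + k • N u + kB • B u)
    (huv : pdv (pdu α) (u, 0) = -kg • t u - τ • B u)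
    (hvv : pdv (pdv α) (u, 0) = K • N u + Kb • B u)
    (huvv : pdv (pdv (pdu α)) (u, 0) = s)
    (hcycle : kB + Kb = 0) :
    ContDiffAt ℝ (⊤ : ℕ∞) (Ht2 α t T N) (u, 0) ∧
    Ht1 α t T N (u, 0) = (K + k) / 2 ∧
    Ec α (u, 0) * gH α t T N (u, 0) - Gc α (u, 0) * eH α t T N (u, 0)
      = (K + k) / 2 * (K - k) ∧
    pdv (fun p => Ec α p * fH α t T N p - Fc α p * eH α t T N p) (u, 0)
      = (K + k) / 2 * ⟪s, N u⟫ - τ * pdv (Ht2 α t T N) (u, 0) := by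
  obtain ⟨htt, hTT, hNN, hBB, htT, htN, htB, hTN, hTB, hNB⟩ := hortho
  have hTt : ⟪T u, t u⟫ = 0 := by rw [real_inner_comm]; exact htT
  have hNt : ⟪N u, t u⟫ = 0 := by rw [real_inner_comm]; exact htN
  have hBt : ⟪B u, t u⟫ = 0 := by rw [real_inner_comm]; exact htB
  have hNT : ⟪N u, T u⟫ = 0 := by rw [real_inner_comm]; exact hTN
  have hBT : ⟪B u, T u⟫ = 0 := by rw [real_inner_comm]; exact hTB
  have hBN : ⟪B u, N u⟫ = 0 := by rw [real_inner_comm]; exact hNB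
  have su := contDiff_pdu hα
  have sv := contDiff_pdv hα
  have suu := contDiff_pdu su
  have suv := contDiff_pdv su
  have svv := contDiff_pdv sv
  have sB1 := contDiff_Bb1 hα ht hT hN
  have vB1 : Bb1 α t T N (u, 0) = N u := Bb1_zero hu hv htt htT htN hTN
  have sB2 : ContDiffAt ℝ (⊤ : ℕ∞) (Bb2 α t T N) (u, 0) :=
    contDiffAt_wedge su.contDiffAt sv.contDiffAt sB1.contDiffAt
  have vB2 : Bb2 α t T N (u, 0) = B u := by
    simp only [Bb2, hu, hv, vB1]
    exact wedge_frame htB hTB hNB hBB hdet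
  have nt := norm_eq_one_of_inner htt
  have nT := norm_eq_one_of_inner hTT
  have nN := norm_eq_one_of_inner hNN
  have nB := norm_eq_one_of_inner hBB
  have sN1 : ContDiffAt ℝ (⊤ : ℕ∞) (N1 α t T N) (u, 0) :=
    contDiffAt_normalize sB1.contDiffAt (by rw [vB1, nN])
  have sN2 : ContDiffAt ℝ (⊤ : ℕ∞) (N2 α t T N) (u, 0) :=
    contDiffAt_normalize sB2 (by rw [vB2, nB])
  have vN1 : N1 α t T N (u, 0) = N u := by simp [N1, vB1, nN]
  have vN2 : N2 α t T N (u, 0) = B u := by simp [N2, vB2, nB]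
  have sE : ContDiff ℝ (⊤ : ℕ∞) (Ec α) := su.inner ℝ su
  have sF : ContDiff ℝ (⊤ : ℕ∞) (Fc α) := su.inner ℝ sv
  have sG : ContDiff ℝ (⊤ : ℕ∞) (Gc α) := sv.inner ℝ sv
  have vE : Ec α (u, 0) = 1 := by simp [Ec, hu, nt]
  have vF : Fc α (u, 0) = 0 := by simp [Fc, hu, hv, htT]
  have vG : Gc α (u, 0) = 1 := by simp [Gc, hv, nT]
  have se1 : ContDiffAt ℝ (⊤ : ℕ∞) (e1 α t T N) (u, 0) := suu.contDiffAt.inner ℝ sN1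
  have se2 : ContDiffAt ℝ (⊤ : ℕ∞) (e2 α t T N) (u, 0) := suu.contDiffAt.inner ℝ sN2
  have sf1 : ContDiffAt ℝ (⊤ : ℕ∞) (f1 α t T N) (u, 0) := suv.contDiffAt.inner ℝ sN1
  have sf2 : ContDiffAt ℝ (⊤ : ℕ∞) (f2 α t T N) (u, 0) := suv.contDiffAt.inner ℝ sN2
  have sg1 : ContDiffAt ℝ (⊤ : ℕ∞) (g1 α t T N) (u, 0) := svv.contDiffAt.inner ℝ sN1
  have sg2 : ContDiffAt ℝ (⊤ : ℕ∞) (g2 α t T N) (u, 0) := svv.contDiffAt.inner ℝ sN2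
  have ve1 : e1 α t T N (u, 0) = k := by
    simp [e1, vN1, huu, inner_add_left, real_inner_smul_left, hTN, nN, hBN]
  have ve2 : e2 α t T N (u, 0) = kB := by
    simp [e2, vN2, huu, inner_add_left, real_inner_smul_left, hTB, hNB, nB]
  have vf1 : f1 α t T N (u, 0) = 0 := by
    simp [f1, vN1, huv, inner_sub_left, inner_neg_left, real_inner_smul_left, htN, hBN]
  have vf2 : f2 α t T N (u, 0) = -τ := by
    simp [f2, vN2, huv, inner_sub_left, inner_neg_left, real_inner_smul_left, htB, nB]
  have vg1 : g1 α t T N (u, 0) = K := by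
    simp [g1, vN1, hvv, inner_add_left, real_inner_smul_left, nN, hBN]
  have vg2 : g2 α t T N (u, 0) = Kb := by
    simp [g2, vN2, hvv, inner_add_left, real_inner_smul_left, hNB, nB]
  have sD : ContDiffAt ℝ (⊤ : ℕ∞) (fun p => 2 * (Ec α p * Gc α p - Fc α p ^ 2)) (u, 0) :=
    (contDiff_const.mul ((sE.mul sG).sub (sF.pow 2))).contDiffAt
  have vD : 2 * (Ec α (u, 0) * Gc α (u, 0) - Fc α (u, 0) ^ 2) ≠ 0 := by
    simp [vE, vF, vG]
  have sH1 : ContDiffAt ℝ (⊤ : ℕ∞) (Ht1 α t T N) (u, 0) :=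
    (((sE.contDiffAt.mul sg1).sub ((contDiffAt_const.mul sF.contDiffAt).mul sf1)).add
      (sG.contDiffAt.mul se1)).div sD vD
  have sH2 : ContDiffAt ℝ (⊤ : ℕ∞) (Ht2 α t T N) (u, 0) :=
    (((sE.contDiffAt.mul sg2).sub ((contDiffAt_const.mul sF.contDiffAt).mul sf2)).add
      (sG.contDiffAt.mul se2)).div sD vD
  have vH1 : Ht1 α t T N (u, 0) = (K + k) / 2 := by
    simp [Ht1, vE, vF, vG, ve1, vg1]
  have vH2 : Ht2 α t T N (u, 0) = 0 := by
    simp only [Ht2, vE, vF, vG, ve2, vg2]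
    have : Kb = -kB := by linarith
    rw [this]; norm_num
  have eHe : eH α t T N = fun p => Ht1 α t T N p * e1 α t T N p + Ht2 α t T N p * e2 α t T N p := by
    funext p
    simp [eH, Hvec, e1, e2, inner_add_right, real_inner_smul_right]
  have fHe : fH α t T N = fun p => Ht1 α t T N p * f1 α t T N p + Ht2 α t T N p * f2 α t T N p := by
    funext p
    simp [fH, Hvec, f1, f2, inner_add_right, real_inner_smul_right]
  have gHe : gH α t T N = fun p => Ht1 α t T N p * g1 α t T N p + Ht2 α t T N p * g2 α t T N p := by
    funext p
    simp [gH, Hvec, g1, g2, inner_add_right, real_inner_smul_right]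
  refine ⟨sH2, vH1, ?_, ?_⟩
  · simp only [eHe, gHe, vE, vG, vH1, vH2, ve1, vg1]
    ring
  have d : ∀ {X : Type} [NormedAddCommGroup X] [NormedSpace ℝ X] {f : ℝ × ℝ → X},
      ContDiffAt ℝ (⊤ : ℕ∞) f (u, 0) → DifferentiableAt ℝ f (u, 0) :=
    fun h => h.differentiableAt (by simp)
  -- `F` vanishes to second order along the cycle.
  have dF : HasDerivAt (fun v => Fc α (u, v)) 0 0 := by
    have := (hasDerivAt_pdv (d su.contDiffAt)).inner ℝ (hasDerivAt_pdv (d sv.contDiffAt))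
    refine this.congr_deriv ?_
    simp [hu, hv, huv, hvv, inner_add_right, inner_sub_left, inner_neg_left,
      real_inner_smul_left, real_inner_smul_right, htN, htB, htT, hBT]
  -- `f₁` is `⟪α_uv, B̄₁⟫`, which vanishes on the cycle, divided by `|B̄₁|`.
  have df1 : HasDerivAt (fun v => f1 α t T N (u, v)) ⟪s, N u⟫ 0 := by
    have hx1 : DifferentiableAt ℝ (x1 α t) (u, 0) :=
      d (su.inner ℝ (contDiff_comp_fst ht)).contDiffAt
    have hx2 : DifferentiableAt ℝ (x2 α T) (u, 0) :=
      d (su.inner ℝ (contDiff_comp_fst hT)).contDiffAt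
    have hy1 : DifferentiableAt ℝ (y1 α N) (u, 0) :=
      d (sv.inner ℝ (contDiff_comp_fst hN)).contDiffAt
    have dx3 : HasDerivAt (fun v => x3 α N (u, v)) 0 0 := by
      have := (hasDerivAt_pdv (d su.contDiffAt)).inner ℝ (hasDerivAt_const (0 : ℝ) (N u))
      refine this.congr_deriv ?_
      simp [huv, inner_sub_left, inner_neg_left, real_inner_smul_left, htN, hBN]
    have dB1 := ((((hasDerivAt_pdv hy1).mul (hasDerivAt_pdv hx2)).sub dx3).smul_const (t u)).sub
      (((hasDerivAt_pdv hx1).mul (hasDerivAt_pdv hy1)).smul_const (T u)) |>.add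
      ((hasDerivAt_pdv hx1).smul_const (N u))
    have dn := (hasDerivAt_pdv (d suv.contDiffAt)).inner ℝ dB1
    have sn : ContDiffAt ℝ (⊤ : ℕ∞) (fun p => ‖Bb1 α t T N p‖⁻¹) (u, 0) := by
      have h0 : Bb1 α t T N (u, 0) ≠ 0 := fun h => by simp [← vB1, h] at nN
      exact (sB1.contDiffAt.norm ℝ h0).inv (by rw [vB1, nN]; exact one_ne_zero)
    have := (hasDerivAt_pdv (d sn)).mul dn
    have hf : (fun v => f1 α t T N (u, v)) = fun v =>
        ‖Bb1 α t T N (u, v)‖⁻¹ * ⟪pdv (pdu α) (u, v), Bb1 α t T N (u, v)⟫ := by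
      funext v
      simp only [f1, N1, real_inner_smul_right]
    rw [hf]
    refine this.congr_deriv ?_
    simp [vB1, nN, x1, x2, x3, y1, hu, hv, huv, huvv, inner_add_right,
      inner_sub_left, inner_neg_left, real_inner_smul_left, real_inner_smul_right,
      nt, htT, htN, hTN, hBN, hBT]
  have dH1 := hasDerivAt_pdv (d sH1)
  have dH2 := hasDerivAt_pdv (d sH2)
  have dfH := (dH1.mul df1).add (dH2.mul (hasDerivAt_pdv (d sf2)))
  have deH := (dH1.mul (hasDerivAt_pdv (d se1))).add (dH2.mul (hasDerivAt_pdv (d se2)))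
  have dtot := ((hasDerivAt_pdv (d sE.contDiffAt)).mul dfH).sub (dF.mul deH)
  have sfH : ContDiffAt ℝ (⊤ : ℕ∞) (fH α t T N) (u, 0) := by
    rw [fHe]; exact (sH1.mul sf1).add (sH2.mul sf2)
  have seH : ContDiffAt ℝ (⊤ : ℕ∞) (eH α t T N) (u, 0) := by
    rw [eHe]; exact (sH1.mul se1).add (sH2.mul se2)
  have dtot' := hasDerivAt_pdv
    (d ((sE.contDiffAt.mul sfH).sub (sF.contDiffAt.mul seH)))
  rw [fHe, eHe] at dtot' ⊢
  refine (dtot'.unique dtot).trans ?_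
  simp [vE, vF, vf1, vf2, vH1, vH2]
  ring

end Chart


/-! ### The derivative of the Poincaré map -/

/-- Proposition 1: for a minimal principal mean curvature cycle avoiding
normal singularities, the logarithm of the derivative of the Poincaré map,
`∫₀^L −(E f_H − F e_H)_v/(E g_H − G e_H) du`, equals
`−∫₀^L k'/(K−k) du − ∫₀^L k_Bτ_B/(K−k) du + ∫₀^L (H̃₂)_v τ/(H̃₁(K−k)) du`. -/
theorem stmt17
    (L : ℝ) (hL : 0 < L)
    (t T N B c : ℝ → E4) (kg k kB τN τ τB K Kb a b : ℝ → ℝ) (A Ab : ℝ × ℝ → ℝ)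
    (htsm : ContDiff ℝ (⊤ : ℕ∞) t) (hTsm : ContDiff ℝ (⊤ : ℕ∞) T) (hNsm : ContDiff ℝ (⊤ : ℕ∞) N)
    (hBsm : ContDiff ℝ (⊤ : ℕ∞) B) (hcsm : ContDiff ℝ (⊤ : ℕ∞) c)
    (hkgsm : ContDiff ℝ (⊤ : ℕ∞) kg) (hksm : ContDiff ℝ (⊤ : ℕ∞) k) (hkBsm : ContDiff ℝ (⊤ : ℕ∞) kB)
    (hτNsm : ContDiff ℝ (⊤ : ℕ∞) τN) (hτsm : ContDiff ℝ (⊤ : ℕ∞) τ) (hτBsm : ContDiff ℝ (⊤ : ℕ∞) τB)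
    (hKsm : ContDiff ℝ (⊤ : ℕ∞) K) (hKbsm : ContDiff ℝ (⊤ : ℕ∞) Kb) (hasm : ContDiff ℝ (⊤ : ℕ∞) a)
    (hbsm : ContDiff ℝ (⊤ : ℕ∞) b) (hAsm : ContDiff ℝ (⊤ : ℕ∞) A) (hAbsm : ContDiff ℝ (⊤ : ℕ∞) Ab)
    (htper : Function.Periodic t L) (hTper : Function.Periodic T L)
    (hNper : Function.Periodic N L) (hBper : Function.Periodic B L)
    (hcper : Function.Periodic c L)
    (hkgper : Function.Periodic kg L) (hkper : Function.Periodic k L)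
    (hkBper : Function.Periodic kB L) (hτNper : Function.Periodic τN L)
    (hτper : Function.Periodic τ L) (hτBper : Function.Periodic τB L)
    (hKper : Function.Periodic K L) (hKbper : Function.Periodic Kb L)
    (haper : Function.Periodic a L) (hbper : Function.Periodic b L)
    (hAper : ∀ u v : ℝ, A (u + L, v) = A (u, v)) (hAbper : ∀ u v : ℝ, Ab (u + L, v) = Ab (u, v))
    (hortho : ∀ u : ℝ, ⟪t u, t u⟫ = 1 ∧ ⟪T u, T u⟫ = 1 ∧ ⟪N u, N u⟫ = 1 ∧
      ⟪B u, B u⟫ = 1 ∧ ⟪t u, T u⟫ = 0 ∧ ⟪t u, N u⟫ = 0 ∧ ⟪t u, B u⟫ = 0 ∧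
      ⟪T u, N u⟫ = 0 ∧ ⟪T u, B u⟫ = 0 ∧ ⟪N u, B u⟫ = 0)
    (hdet : ∀ u : ℝ, Matrix.det (Matrix.of ![(t u : Fin 4 → ℝ), T u, N u, B u]) = 1)
    (hDt : ∀ u : ℝ, deriv t u = kg u • T u + k u • N u + kB u • B u)
    (hDT : ∀ u : ℝ, deriv T u = -(kg u) • t u - τN u • N u - τ u • B u)
    (hDN : ∀ u : ℝ, deriv N u = -(k u) • t u + τN u • T u + τB u • B u)
    (hDB : ∀ u : ℝ, deriv B u = -(kB u) • t u + τ u • T u - τB u • N u)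
    (hct : ∀ u : ℝ, deriv c u = t u)
    (hA0 : ∀ u : ℝ, A (u, 0) = 0) (hAb0 : ∀ u : ℝ, Ab (u, 0) = 0)
    (α : ℝ × ℝ → E4)
    (hα : ∀ u v : ℝ, α (u, v) = c u + v • T u +
      (K u * v ^ 2 / 2 + a u * v ^ 3 / 6 + v ^ 3 * A (u, v)) • N u +
      (Kb u * v ^ 2 / 2 + b u * v ^ 3 / 6 + v ^ 3 * Ab (u, v)) • B u)
    (hτN0 : ∀ u : ℝ, τN u = 0) (hcycle : ∀ u : ℝ, kB u + Kb u = 0)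
    (hmin : ∀ u : ℝ, 0 < K u - k u) (hns : ∀ u : ℝ, k u + K u ≠ 0) :
    ∫ u in (0:ℝ)..L,
        (-(pdv (fun p => Ec α p * fH α t T N p - Fc α p * eH α t T N p) (u, 0))) /
          (Ec α (u, 0) * gH α t T N (u, 0) - Gc α (u, 0) * eH α t T N (u, 0)) =
      -(∫ u in (0:ℝ)..L, deriv k u / (K u - k u)) -
        (∫ u in (0:ℝ)..L, kB u * τB u / (K u - k u)) +
        ∫ u in (0:ℝ)..L, pdv (Ht2 α t T N) (u, 0) * τ u / (Ht1 α t T N (u, 0) * (K u - k u)) := by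
  have hαeq : α = fun p : ℝ × ℝ => c p.1 + p.2 • T p.1 +
      (K p.1 * p.2 ^ 2 / 2 + a p.1 * p.2 ^ 3 / 6 + p.2 ^ 3 * A p) • N p.1 +
      (Kb p.1 * p.2 ^ 2 / 2 + b p.1 * p.2 ^ 3 / 6 + p.2 ^ 3 * Ab p) • B p.1 := by
    funext p; exact hα p.1 p.2
  have sα : ContDiff ℝ (⊤ : ℕ∞) α := by
    rw [hαeq]; fun_prop
  have su := contDiff_pdu sα
  have sv := contDiff_pdv sα
  have hα0 : ∀ u, α (u, 0) = c u := fun u => by simp [hα]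
  have hder : ∀ {f : ℝ → E4}, ContDiff ℝ (⊤ : ℕ∞) f → ∀ u, HasDerivAt f (deriv f u) u :=
    fun h u => (h.differentiableAt_top u).hasDerivAt
  have hu : ∀ u, pdu α (u, 0) = t u := fun u => by
    have h := hasDerivAt_pdu (sα.differentiableAt_top (u, 0))
    simp only [hα0] at h
    rw [h.unique (hder hcsm u), hct]
  have hv2 : ∀ u, pdv α (u, 0) = T u ∧ pdv (pdv α) (u, 0) = K u • N u + Kb u • B u := fun u => by
    have := second_deriv_zero (x := c u) (y := T u)
      (W := fun v => (K u / 2 + a u * v / 6 + v * A (u, v)) • N u +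
        (Kb u / 2 + b u * v / 6 + v * Ab (u, v)) • B u)
      (g := fun v => α (u, v)) (g' := fun v => pdv α (u, v)) (g'' := pdv (pdv α) (u, 0))
      (by fun_prop) (fun v => by rw [hα]; module)
      (fun v => hasDerivAt_pdv (sα.differentiableAt_top (u, v)))
      (hasDerivAt_pdv (sv.differentiableAt_top (u, 0)))
    refine ⟨this.1, this.2.trans ?_⟩
    simp only [mul_zero, zero_div, zero_mul, add_zero]
    module
  have hv := fun u => (hv2 u).1
  have hvv := fun u => (hv2 u).2
  have huu : ∀ u, pdu (pdu α) (u, 0) = kg u • T u + k u • N u + kB u • B u := fun u => by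
    have h := hasDerivAt_pdu (su.differentiableAt_top (u, 0))
    simp only [hu] at h
    rw [h.unique (hder htsm u), hDt]
  have huv : ∀ u, pdv (pdu α) (u, 0) = -(kg u) • t u - τ u • B u := fun u => by
    have h := hasDerivAt_pdu (sv.differentiableAt_top (u, 0))
    simp only [hv] at h
    rw [pdv_pdu sα, h.unique (hder hTsm u), hDT, hτN0]
    simp
  have huvv : ∀ u, ⟪pdv (pdv (pdu α)) (u, 0), N u⟫ = deriv K u + kB u * τB u := fun u => by
    have h := hasDerivAt_pdu ((contDiff_pdv sv).differentiableAt_top (u, 0))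
    simp only [hvv] at h
    have h2 := ((hKsm.differentiableAt_top u).hasDerivAt.smul (hder hNsm u)).add
      ((hKbsm.differentiableAt_top u).hasDerivAt.smul (hder hBsm u))
    rw [pdv_pdu sα, pdv_pdu sv, h.unique h2, hDN, hDB, hτN0]
    obtain ⟨htt, hTT, hNN, hBB, htT, htN, htB, hTN, hTB, hNB⟩ := hortho u
    have hBN : ⟪B u, N u⟫ = 0 := by rw [real_inner_comm]; exact hNB
    have hKb : Kb u = -kB u := by linarith [hcycle u]
    simp [inner_add_left, inner_sub_left, real_inner_smul_left, htN, hTN, norm_eq_one_of_inner hNN,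
      hBN, hKb]
  have key := fun u => chart_at_cycle (u := u) sα htsm hTsm hNsm (hortho u) (hdet u) (hu u) (hv u)
    (huu u) (huv u) (hvv u) rfl (hcycle u)
  have hne : ∀ u, K u - k u ≠ 0 := fun u => (hmin u).ne'
  have hne2 : ∀ u, K u + k u ≠ 0 := fun u => by rw [add_comm]; exact hns u
  have cdk : Continuous (deriv k) := hksm.continuous_deriv (by simp)
  have cdK : Continuous (deriv K) := hKsm.continuous_deriv (by simp)
  have cKk : Continuous (fun u => K u - k u) := hKsm.continuous.sub hksm.continuous
  have cH2 : Continuous (fun u => pdv (Ht2 α t T N) (u, 0)) := by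
    rw [continuous_iff_continuousAt]
    intro u
    have h1 : ContinuousAt (fderiv ℝ (Ht2 α t T N)) (u, 0) :=
      ((key u).1.fderiv_right (m := (⊤ : ℕ∞)) (by simp)).continuousAt
    have h2 : ContinuousAt (fun s : ℝ => fderiv ℝ (Ht2 α t T N) (s, 0)) u :=
      ContinuousAt.comp (f := fun s : ℝ => (s, (0 : ℝ))) h1 (by fun_prop)
    exact h2.clm_apply continuousAt_const
  -- The total derivative of `log (K - k)` integrates to zero over a period.
  have hlog : ∫ u in (0:ℝ)..L, (deriv K u - deriv k u) / (K u - k u) = 0 := by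
    have hd : ∀ u ∈ Set.uIcc 0 L, HasDerivAt (fun s => Real.log (K s - k s))
        ((deriv K u - deriv k u) / (K u - k u)) u := fun u _ =>
      (((hKsm.differentiableAt_top u).hasDerivAt).sub
        ((hksm.differentiableAt_top u).hasDerivAt)).log (hne u)
    rw [intervalIntegral.integral_eq_sub_of_hasDerivAt hd
      (((cdK.sub cdk).div cKk hne).intervalIntegrable _ _)]
    have h1 : K L = K 0 := by simpa using hKper 0
    have h2 : k L = k 0 := by simpa using hkper 0
    rw [h1, h2, sub_self]
  have i0 : IntervalIntegrable (fun u => (deriv K u - deriv k u) / (K u - k u))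
      MeasureTheory.volume 0 L := ((cdK.sub cdk).div cKk hne).intervalIntegrable _ _
  have i1 : IntervalIntegrable (fun u => -(deriv k u / (K u - k u)))
      MeasureTheory.volume 0 L := (cdk.div cKk hne).neg.intervalIntegrable _ _
  have i2 : IntervalIntegrable (fun u => kB u * τB u / (K u - k u)) MeasureTheory.volume 0 L :=
    ((hkBsm.continuous.mul hτBsm.continuous).div cKk hne).intervalIntegrable _ _
  have i3 : IntervalIntegrable (fun u => pdv (Ht2 α t T N) (u, 0) * τ u /
      (Ht1 α t T N (u, 0) * (K u - k u))) MeasureTheory.volume 0 L := by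
    have hH1 : ∀ u, Ht1 α t T N (u, 0) = (K u + k u) / 2 := fun u => (key u).2.1
    simp only [hH1]
    refine Continuous.intervalIntegrable (Continuous.div (cH2.mul hτsm.continuous)
      (((hKsm.continuous.add hksm.continuous).div_const 2).mul cKk) fun u => ?_) _ _
    exact mul_ne_zero (div_ne_zero (hne2 u) two_ne_zero) (hne u)
  have hk : -(∫ u in (0:ℝ)..L, deriv k u / (K u - k u)) =
      -(∫ u in (0:ℝ)..L, deriv k u / (K u - k u)) -
        ∫ u in (0:ℝ)..L, (deriv K u - deriv k u) / (K u - k u) := by rw [hlog, sub_zero]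
  rw [hk, ← intervalIntegral.integral_neg, ← intervalIntegral.integral_sub i1 i0,
    ← intervalIntegral.integral_sub (i1.sub i0) i2,
    ← intervalIntegral.integral_add ((i1.sub i0).sub i2) i3]
  refine intervalIntegral.integral_congr fun u _ => ?_
  obtain ⟨-, k1, k2, k3⟩ := key u
  have h1 := hne u
  have h2 := hne2 u
  simp only [k1, k2, k3, huvv u]
  field_simp
  ring
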